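/- Assume neither p nor q is a root of unity, and let A_S be the localization of A = A_p(1, 1, K_q[s,t]) at S. Then every unital K-algebra endomorphism φ of A_S of positive type (i.e. with φ(z) = α·z for some α ∈ K^×) is an automorphism; in fact such φ has the form φ(z) = z, φ(x) = α·z^i s^j t^k x, φ(y) = α⁻¹ p^i q^{−jk} z^{−i} s^{−j} t^{−k} y, φ(s) = β·z^m s^c t^d, φ(t) = γ·z^n s^e t^f, where α, β, γ ∈ K^× and the integers i, j, k, m, n, c, d, e, f satisfy p^m q^{dj−ck} = 1, p^n q^{fj−ek} = 1 and cf − de = 1. -/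

import Mathlib

/-!
The algebra `A_S` has the `K`-basis `z^i s^j t^k X_n`, where `X_n = x^n` for `n ≥ 0` and
`X_n = y^{-n}` for `n < 0`. Spanning is a computation with the relations (`QWeylData.span_E`).
Independence (`QWeylData.linearIndependent_E`) comes from a representation on the functions
`ℤ × ℤ → K` in which `x` and `s` act by shifts and `z` and `t` by the diagonal operators `p ^ n`
and `q ^ b`; as `p` and `q` are not roots of unity, independence of characters applies.

Since `X_n z = p ^ n z X_n`, an element `v` with `v z = p ^ m z v` has the form `r X_m` with `r` in
the quantum torus `R` spanned by the monomials `z^i s^j t^k` (`QWeylData.exists_L_mul_X`). The ring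
`R` is a twisted group algebra of `ℤ³`, hence a domain whose units are the scalar multiples of
monomials (`twisted_eq_zero_or_eq_zero`, `twisted_unit_monomial`).

Let `φ(z) = α z`. Relations `v z = r z v` are preserved by `φ`, so `φ(s)` and `φ(t)` are units of
`R`, hence monomials, and `φ(x) = g x`, `φ(y) = y h` with `g, h ∈ R`. Applying `φ` to
`(p - 1) x y = p z - 1` gives `g h (p z - 1) = p α z - 1`. The operator `p z - 1` kills the delta
function at `(0, -1)`, on which `p α z - 1` acts by `α - 1`; therefore `α = 1`, then `g h = 1`, and
`g`, `h` are monomials as well. Comparing scalars in `φ(s) φ(t) = q φ(t) φ(s)` and in the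
commutation of `φ(x)` with `φ(s)` and `φ(t)` gives the three identities between the exponents.
Finally `φ` permutes the basis up to nonzero scalars, through an invertible integral linear map on
the exponents, so it is bijective (`QWeylData.bijective_of_isMono`).
-/

noncomputable section

open FreeAlgebra

/-- Relations of the algebra `A_p(lam, mu, K_q[s,t])`; for `lam = mu = 1` this is
`A_p(1, 1, K_q[s,t])`: `xy - p·yx = 1`, `st = q·ts`, `s,t` commute with `x,y`. -/
inductive ExtWeylRel (K : Type*) [Field K] (p q lam mu : K) :
    FreeAlgebra K (Fin 4) → FreeAlgebra K (Fin 4) → Prop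
  | weyl : ExtWeylRel K p q lam mu (ι K (0 : Fin 4) * ι K 1 - p • (ι K 1 * ι K 0)) 1
  | st : ExtWeylRel K p q lam mu (ι K (2 : Fin 4) * ι K 3) (q • (ι K 3 * ι K 2))
  | sx : ExtWeylRel K p q lam mu (ι K (2 : Fin 4) * ι K 0) (lam • (ι K 0 * ι K 2))
  | sy : ExtWeylRel K p q lam mu (ι K (2 : Fin 4) * ι K 1) (lam⁻¹ • (ι K 1 * ι K 2))
  | tx : ExtWeylRel K p q lam mu (ι K (3 : Fin 4) * ι K 0) (mu • (ι K 0 * ι K 3))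
  | ty : ExtWeylRel K p q lam mu (ι K (3 : Fin 4) * ι K 1) (mu⁻¹ • (ι K 1 * ι K 3))

/-- The algebra `A_p(lam, mu, K_q[s,t])`. -/
abbrev ExtWeyl (K : Type*) [Field K] (p q lam mu : K) : Type _ :=
  RingQuot (ExtWeylRel K p q lam mu)

variable (K : Type*) [Field K] (p q : K)

/-- The generator `x` of `A = A_p(1, 1, K_q[s,t])`. -/
def wx : ExtWeyl K p q 1 1 := RingQuot.mkAlgHom K _ (ι K 0)
/-- The generator `y`. -/
def wy : ExtWeyl K p q 1 1 := RingQuot.mkAlgHom K _ (ι K 1)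
/-- The generator `s`. -/
def ws : ExtWeyl K p q 1 1 := RingQuot.mkAlgHom K _ (ι K 2)
/-- The generator `t`. -/
def wt : ExtWeyl K p q 1 1 := RingQuot.mkAlgHom K _ (ι K 3)
/-- The element `z = xy - yx`. -/
def wz : ExtWeyl K p q 1 1 := wx K p q * wy K p q - wy K p q * wx K p q

/-- The multiplicative (Ore) set `S` generated by `z, s, t`. -/
def locS : Submonoid (ExtWeyl K p q 1 1) :=
  Submonoid.closure {wz K p q, ws K p q, wt K p q}

variable [OreLocalization.OreSet (locS K p q)]

/-- The localization `A_S` of `A` at the Ore set `S`. -/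
abbrev ALoc := OreLocalization (locS K p q) (ExtWeyl K p q 1 1)

/-- The image of `x` in `A_S`. -/
def lx : ALoc K p q := OreLocalization.numeratorRingHom (wx K p q)
/-- The image of `y` in `A_S`. -/
def ly : ALoc K p q := OreLocalization.numeratorRingHom (wy K p q)
/-- The image of `s` in `A_S`. -/
def ls : ALoc K p q := OreLocalization.numeratorRingHom (ws K p q)
/-- The image of `t` in `A_S`. -/
def lt : ALoc K p q := OreLocalization.numeratorRingHom (wt K p q)
/-- The image of `z` in `A_S`. -/
def lz : ALoc K p q := OreLocalization.numeratorRingHom (wz K p q)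

/-- `z` as a unit of `A_S`. -/
def uz : (ALoc K p q)ˣ :=
  OreLocalization.numeratorUnit ⟨wz K p q, Submonoid.subset_closure (by simp)⟩
/-- `s` as a unit of `A_S`. -/
def us : (ALoc K p q)ˣ :=
  OreLocalization.numeratorUnit ⟨ws K p q, Submonoid.subset_closure (by simp)⟩
/-- `t` as a unit of `A_S`. -/
def ut : (ALoc K p q)ˣ :=
  OreLocalization.numeratorUnit ⟨wt K p q, Submonoid.subset_closure (by simp)⟩

/-! ### Twisted group algebras of groups with unique sums -/

section TwistedMonomials

variable {K B G : Type*} [Field K] [Ring B] [Algebra K B] [AddGroup G]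
  {M : G → B} {c : G → G → K}

/-- In an algebra with elements `M g` multiplying like a twisted group algebra,
`M g * M h = c g h • M (g + h)`, the product of two linear combinations is the twisted
convolution of the coefficients. -/
theorem twisted_linearCombination_mul (hM : ∀ g h, M g * M h = c g h • M (g + h))
    (f f' : G →₀ K) :
    Finsupp.linearCombination K M f * Finsupp.linearCombination K M f' =
      Finsupp.linearCombination K M
        (∑ g ∈ f.support, ∑ h ∈ f'.support, Finsupp.single (g + h) (f g * f' h * c g h)) := by
  simp only [map_sum, Finsupp.linearCombination_single]
  rw [Finsupp.linearCombination_apply, Finsupp.linearCombination_apply, Finsupp.sum, Finsupp.sum,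
    Finset.sum_mul_sum]
  refine Finset.sum_congr rfl fun g _ => Finset.sum_congr rfl fun h _ => ?_
  rw [smul_mul_smul_comm, hM, smul_smul]

/-- At a sum `a + b` attained only once on the product of the supports, the twisted
convolution has a single term. -/
theorem twisted_coeff_uniqueAdd (f f' : G →₀ K) {a b : G} (ha : a ∈ f.support)
    (hb : b ∈ f'.support) (hu : UniqueAdd f.support f'.support a b) :
    (∑ g ∈ f.support, ∑ h ∈ f'.support, Finsupp.single (g + h) (f g * f' h * c g h)) (a + b) =
      f a * f' b * c a b := by
  classical
  simp only [Finsupp.finsetSum_apply]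
  rw [Finset.sum_eq_single_of_mem a ha, Finset.sum_eq_single_of_mem b hb]
  · simp
  · intro h hh hne
    rw [Finsupp.single_eq_of_ne]
    intro heq
    exact hne (hu ha hh heq.symm).2
  · intro g hg hne
    refine Finset.sum_eq_zero fun h hh => ?_
    rw [Finsupp.single_eq_of_ne]
    intro heq
    exact hne (hu hg hh heq.symm).1

/-- A twisted group algebra of a group with unique sums has no zero divisors: the coefficient
of a product at a uniquely attained sum is a product of nonzero scalars. -/
theorem twisted_eq_zero_or_eq_zero [TwoUniqueSums G] (hM : ∀ g h, M g * M h = c g h • M (g + h))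
    (hc : ∀ g h, c g h ≠ 0) (hli : LinearIndependent K M) (f f' : G →₀ K)
    (h : Finsupp.linearCombination K M f * Finsupp.linearCombination K M f' = 0) :
    f = 0 ∨ f' = 0 := by
  by_contra! hne
  rw [twisted_linearCombination_mul hM] at h
  have h0 := (linearIndependent_iff.1 hli) _ h
  obtain ⟨a, ha, b, hb, hu⟩ := UniqueSums.uniqueAdd_of_nonempty
    (Finsupp.support_nonempty_iff.2 hne.1) (Finsupp.support_nonempty_iff.2 hne.2)
  have := twisted_coeff_uniqueAdd (c := c) f f' ha hb hu
  rw [h0] at this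
  exact mul_ne_zero (mul_ne_zero (Finsupp.mem_support_iff.1 ha) (Finsupp.mem_support_iff.1 hb))
    (hc a b) (by simpa using this.symm)

/-- The units of a twisted group algebra of a group with two unique sums are scalar multiples
of the monomials `M g`: two different uniquely attained sums would both have to be `0`. -/
theorem twisted_unit_monomial [TwoUniqueSums G] (hM : ∀ g h, M g * M h = c g h • M (g + h))
    (hc : ∀ g h, c g h ≠ 0) (hli : LinearIndependent K M) (f f' : G →₀ K)
    (h : Finsupp.linearCombination K M f * Finsupp.linearCombination K M f' = M 0) :
    ∃ (g : G) (a : K), a ≠ 0 ∧ Finsupp.linearCombination K M f = a • M g := by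
  have hM0 : M 0 ≠ 0 := hli.ne_zero 0
  have hf : f ≠ 0 := by rintro rfl; simp at h; exact hM0 h.symm
  have hf' : f' ≠ 0 := by rintro rfl; simp at h; exact hM0 h.symm
  have key : ∀ a ∈ f.support, ∀ b ∈ f'.support, UniqueAdd f.support f'.support a b →
      a + b = 0 := by
    intro a ha b hb hu
    by_contra hab
    rw [twisted_linearCombination_mul hM] at h
    have h1 : M 0 = Finsupp.linearCombination K M (Finsupp.single 0 1) := by simp
    rw [h1] at h
    have h0 := hli h
    have := twisted_coeff_uniqueAdd (c := c) f f' ha hb hu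
    rw [h0, Finsupp.single_eq_of_ne hab] at this
    exact mul_ne_zero (mul_ne_zero (Finsupp.mem_support_iff.1 ha) (Finsupp.mem_support_iff.1 hb))
      (hc a b) this.symm
  have h1 := Finset.card_pos.2 (Finsupp.support_nonempty_iff.2 hf)
  have h2 := Finset.card_pos.2 (Finsupp.support_nonempty_iff.2 hf')
  have hcard : ¬ 1 < f.support.card * f'.support.card := by
    intro hlt
    obtain ⟨⟨a, b⟩, hab, ⟨a', b'⟩, hab', hne, hu, hu'⟩ :=
      TwoUniqueSums.uniqueAdd_of_one_lt_card hlt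
    rw [Finset.mem_product] at hab hab'
    have e1 := key a hab.1 b hab.2 hu
    have e2 := key a' hab'.1 b' hab'.2 hu'
    have := hu hab'.1 hab'.2 (e2.trans e1.symm)
    exact hne (Prod.ext this.1.symm this.2.symm)
  have hone : f.support.card = 1 := by
    have := Nat.le_mul_of_pos_right f.support.card h2
    omega
  obtain ⟨g, a, ha, rfl⟩ := Finsupp.card_support_eq_one'.1 hone
  exact ⟨g, a, ha, by simp⟩

end TwistedMonomials

section Twist
variable {K B : Type*} [Field K] [Ring B] [Algebra K B]

theorem mul_zpow_of_mul_eq_smul {a : B} {u : Bˣ} {c : K} (hc : c ≠ 0)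
    (h : a * u = c • ((u : B) * a)) (n : ℤ) :
    a * ((u ^ n : Bˣ) : B) = c ^ n • (((u ^ n : Bˣ) : B) * a) := by
  have hinv : a * ((u⁻¹ : Bˣ) : B) = c⁻¹ • (((u⁻¹ : Bˣ) : B) * a) := by
    have h2 : ((u⁻¹ : Bˣ) : B) * (a * u) * ((u⁻¹ : Bˣ) : B) =
        ((u⁻¹ : Bˣ) : B) * (c • ((u : B) * a)) * ((u⁻¹ : Bˣ) : B) := by rw [h]
    rw [← mul_assoc, Units.mul_inv_cancel_right, mul_smul_comm, Units.inv_mul_cancel_left,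
      smul_mul_assoc] at h2
    rw [h2, smul_smul, inv_mul_cancel₀ hc, one_smul]
  induction n using Int.induction_on with
  | zero => simp
  | succ n ih =>
    rw [zpow_add_one, Units.val_mul, ← mul_assoc, ih, smul_mul_assoc, mul_assoc, h,
      mul_smul_comm, smul_smul, zpow_add_one₀ hc, mul_assoc]
  | pred n ih =>
    rw [zpow_sub_one, Units.val_mul, ← mul_assoc, ih, smul_mul_assoc, mul_assoc, hinv,
      mul_smul_comm, smul_smul, zpow_sub_one₀ hc, mul_assoc]

theorem zpow_mul_of_mul_eq_smul {a : B} {u : Bˣ} {c : K} (hc : c ≠ 0)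
    (h : (u : B) * a = c • (a * (u : B))) (n : ℤ) :
    ((u ^ n : Bˣ) : B) * a = c ^ n • (a * ((u ^ n : Bˣ) : B)) := by
  have h' : a * u = c⁻¹ • ((u : B) * a) := by
    rw [h, smul_smul, inv_mul_cancel₀ hc, one_smul]
  rw [mul_zpow_of_mul_eq_smul (inv_ne_zero hc) h', smul_smul, ← mul_zpow, mul_inv_cancel₀ hc,
    one_zpow, one_smul]

theorem eq_of_zpow_eq_zpow {p : K} (hp : p ≠ 0) (hpru : ∀ n : ℕ, 0 < n → p ^ n ≠ 1)
    {m n : ℤ} (h : p ^ m = p ^ n) : m = n := by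
  have aux : ∀ m n : ℤ, m < n → p ^ m ≠ p ^ n := by
    intro m n hlt h
    apply hpru (n - m).toNat (by omega)
    rw [← zpow_natCast, Int.toNat_of_nonneg (by omega), zpow_sub₀ hp, ← h,
      div_self (zpow_ne_zero _ hp)]
  rcases lt_trichotomy m n with hl | hl | hl
  · exact absurd h (aux _ _ hl)
  · exact hl
  · exact absurd h.symm (aux _ _ hl)

end Twist

/-! ### Relations between monomials -/

/-- A `K`-algebra `B` with elements `x, y` and units `z, s, t` satisfying the relations of
`A_S`, generated by `x, y, z⁻¹, s^{±1}, t^{±1}` (so `z = xy - yx` need not be listed), together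
with a representation `ρ` on the functions `ℤ × ℤ → K`. In `ρ`, with the two variables called
`(b, n)`, the elements `s` and `x` shift `b` and `n`, while `t` and `z` multiply by `q ^ b` and
`p ^ n`. The representation is what separates the elements of `B`. Working with this structure
isolates the argument from the construction of the Ore localization. -/
structure QWeylData (K : Type*) [Field K] (p q : K) (B : Type*) [Ring B] [Algebra K B] where
  x : B
  y : B
  z : Bˣ
  s : Bˣ
  t : Bˣ
  weyl : x * y - p • (y * x) = 1
  z_eq : (z : B) = x * y - y * x
  st : (s : B) * t = q • ((t : B) * s)
  sx : (s : B) * x = x * s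
  sy : (s : B) * y = y * s
  tx : (t : B) * x = x * t
  ty : (t : B) * y = y * t
  ρ : B →ₐ[K] Module.End K (ℤ × ℤ → K)
  ρ_x : ∀ f b n, ρ x f (b, n) = f (b, n + 1)
  ρ_y : ∀ f b n, ρ y f (b, n) = (p ^ n - 1) / (p - 1) * f (b, n - 1)
  ρ_z : ∀ f b n, ρ z f (b, n) = p ^ n * f (b, n)
  ρ_s : ∀ f b n, ρ s f (b, n) = f (b + 1, n)
  ρ_t : ∀ f b n, ρ t f (b, n) = q ^ b * f (b, n)
  gen : ∀ N : Subalgebra K B, x ∈ N → y ∈ N → ((z⁻¹ : Bˣ) : B) ∈ N → (s : B) ∈ N →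
    ((s⁻¹ : Bˣ) : B) ∈ N → (t : B) ∈ N → ((t⁻¹ : Bˣ) : B) ∈ N → N = ⊤

namespace QWeylData

variable {K B : Type*} [Field K] {p q : K} [Ring B] [Algebra K B] (D : QWeylData K p q B)

/-- The monomial `z^i s^j t^k` attached to the exponent `(i, j, k)`, as a unit. -/
def M (g : ℤ × ℤ × ℤ) : Bˣ := D.z ^ g.1 * D.s ^ g.2.1 * D.t ^ g.2.2

/-- `X n` is `x ^ n` for `n ≥ 0` and `y ^ (-n)` for `n < 0`. -/
def X : ℤ → B
  | Int.ofNat n => D.x ^ n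
  | Int.negSucc n => D.y ^ (n + 1)

/-- The family `z^i s^j t^k X n`, which turns out to be a `K`-basis. -/
def E (e : (ℤ × ℤ × ℤ) × ℤ) : B := D.M e.1 * D.X e.2

theorem nontriv (D : QWeylData K p q B) : Nontrivial B :=
  (D.ρ : B →+* Module.End K (ℤ × ℤ → K)).domain_nontrivial

theorem xy_eq : D.x * D.y = p • (D.y * D.x) + 1 := by
  rw [← D.weyl]; abel

theorem z_eq' : (D.z : B) = (p - 1) • (D.y * D.x) + 1 := by
  rw [D.z_eq, D.xy_eq, sub_smul, one_smul]; abel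

theorem x_mul_z : D.x * D.z = p • ((D.z : B) * D.x) := by
  have h : D.x * (D.y * D.x) = p • (D.y * D.x * D.x) + D.x := by
    rw [← mul_assoc, D.xy_eq, add_mul, smul_mul_assoc, one_mul]
  rw [D.z_eq', mul_add, add_mul, mul_smul_comm, smul_mul_assoc, h, one_mul, mul_one]
  module

theorem z_mul_y : (D.z : B) * D.y = p • (D.y * (D.z : B)) := by
  have h : D.y * D.x * D.y = p • (D.y * (D.y * D.x)) + D.y := by
    rw [mul_assoc, D.xy_eq, mul_add, mul_smul_comm, mul_one]
  rw [D.z_eq', mul_add, add_mul, mul_smul_comm, smul_mul_assoc, h, one_mul, mul_one]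
  module

theorem z_mul_s : (D.z : B) * D.s = D.s * D.z := by
  rw [D.z_eq, mul_sub, sub_mul]
  simp only [← mul_assoc, D.sx, D.sy]
  simp only [mul_assoc, D.sx, D.sy]

theorem z_mul_t : (D.z : B) * D.t = D.t * D.z := by
  rw [D.z_eq, mul_sub, sub_mul]
  simp only [← mul_assoc, D.tx, D.ty]
  simp only [mul_assoc, D.tx, D.ty]

theorem commute_zs (i j : ℤ) : Commute (D.z ^ i) (D.s ^ j) :=
  Commute.zpow_zpow (Units.ext D.z_mul_s) i j

theorem commute_zt (i j : ℤ) : Commute (D.z ^ i) (D.t ^ j) :=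
  Commute.zpow_zpow (Units.ext D.z_mul_t) i j

theorem z_mul_M (g : ℤ × ℤ × ℤ) : (D.z : B) * D.M g = D.M g * D.z := by
  have h : Commute D.z (D.M g) :=
    ((Commute.zpow_right (Commute.refl D.z) g.1).mul_right
      (by simpa using D.commute_zs 1 g.2.1)).mul_right (by simpa using D.commute_zt 1 g.2.2)
  exact congrArg Units.val h.eq

theorem t_zpow_mul_s_zpow (hq : q ≠ 0) (k j : ℤ) : ((D.t ^ k : Bˣ) : B) * ((D.s ^ j : Bˣ) : B) =
    q ^ (-(k * j)) • (((D.s ^ j : Bˣ) : B) * ((D.t ^ k : Bˣ) : B)) := by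
  have h : (D.t : B) * D.s = q⁻¹ • ((D.s : B) * D.t) := by
    rw [D.st, smul_smul, inv_mul_cancel₀ hq, one_smul]
  have h1 := zpow_mul_of_mul_eq_smul (inv_ne_zero hq) h k
  have h2 := mul_zpow_of_mul_eq_smul (zpow_ne_zero _ (inv_ne_zero hq)) h1 j
  rw [h2, ← zpow_mul, inv_zpow']

theorem M_zero : D.M 0 = 1 := by simp [M]

theorem M_mul (hq : q ≠ 0) (g h : ℤ × ℤ × ℤ) :
    (D.M g : B) * D.M h = q ^ (-(g.2.2 * h.2.1)) • (D.M (g + h) : B) := by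
  obtain ⟨i, j, k⟩ := g
  obtain ⟨i', j', k'⟩ := h
  have h1 : D.M (i, j, k) * D.M (i', j', k') =
      (D.z ^ (i + i') * D.s ^ j) * (D.t ^ k * D.s ^ j') * D.t ^ k' := by
    simp only [M, zpow_add]
    have e1 := (D.commute_zt i' k).eq
    have e2 := (D.commute_zs i' j).eq
    calc D.z ^ i * D.s ^ j * D.t ^ k * (D.z ^ i' * D.s ^ j' * D.t ^ k')
        = D.z ^ i * D.s ^ j * (D.t ^ k * D.z ^ i') * D.s ^ j' * D.t ^ k' := by group
      _ = D.z ^ i * (D.s ^ j * D.z ^ i') * D.t ^ k * D.s ^ j' * D.t ^ k' := by rw [← e1]; group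
      _ = _ := by rw [← e2]; group
  rw [← Units.val_mul, h1]
  simp only [Units.val_mul, D.t_zpow_mul_s_zpow hq, M, Prod.mk_add_mk, mul_smul_comm,
    smul_mul_assoc]
  congr 1
  simp only [← Units.val_mul, zpow_add, mul_assoc]

theorem x_mul_M (hp : p ≠ 0) (g : ℤ × ℤ × ℤ) :
    D.x * D.M g = p ^ g.1 • ((D.M g : B) * D.x) := by
  have h1 := mul_zpow_of_mul_eq_smul hp D.x_mul_z g.1
  have h2 := mul_zpow_of_mul_eq_smul (K := K) one_ne_zero
    (show D.x * D.s = (1 : K) • ((D.s : B) * D.x) by rw [one_smul, D.sx]) g.2.1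
  have h3 := mul_zpow_of_mul_eq_smul (K := K) one_ne_zero
    (show D.x * D.t = (1 : K) • ((D.t : B) * D.x) by rw [one_smul, D.tx]) g.2.2
  rw [one_zpow, one_smul] at h2 h3
  simp only [M, Units.val_mul, ← mul_assoc, h1, smul_mul_assoc]
  congr 1
  rw [mul_assoc (_ : B) D.x, h2, ← mul_assoc, mul_assoc (_ : B) D.x, h3, ← mul_assoc]

theorem y_mul_M (hp : p ≠ 0) (g : ℤ × ℤ × ℤ) :
    D.y * D.M g = p ^ (-g.1) • ((D.M g : B) * D.y) := by
  have h0 : D.y * D.z = p⁻¹ • ((D.z : B) * D.y) := by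
    rw [D.z_mul_y, smul_smul, inv_mul_cancel₀ hp, one_smul]
  have h1 := mul_zpow_of_mul_eq_smul (inv_ne_zero hp) h0 g.1
  have h2 := mul_zpow_of_mul_eq_smul (K := K) one_ne_zero
    (show D.y * D.s = (1 : K) • ((D.s : B) * D.y) by rw [one_smul, D.sy]) g.2.1
  have h3 := mul_zpow_of_mul_eq_smul (K := K) one_ne_zero
    (show D.y * D.t = (1 : K) • ((D.t : B) * D.y) by rw [one_smul, D.ty]) g.2.2
  rw [one_zpow, one_smul] at h2 h3
  rw [inv_zpow'] at h1
  simp only [M, Units.val_mul, ← mul_assoc, h1, smul_mul_assoc]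
  congr 1
  rw [mul_assoc (_ : B) D.y, h2, ← mul_assoc, mul_assoc (_ : B) D.y, h3, ← mul_assoc]

theorem X_natCast (n : ℕ) : D.X n = D.x ^ n := rfl

theorem X_neg_natCast (n : ℕ) : D.X (-n) = D.y ^ n := by
  cases n with
  | zero => simpa using D.X_natCast 0
  | succ n => rfl

theorem X_zero : D.X 0 = 1 := by simpa using D.X_natCast 0
theorem X_one : D.X 1 = D.x := by simpa using D.X_natCast 1
theorem X_neg_one : D.X (-1) = D.y := by simpa using D.X_neg_natCast 1

/-- Conjugation by `z` is diagonal on the basis, with eigenvalue recording the degree `n`. -/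
theorem X_mul_z (hp : p ≠ 0) (n : ℤ) : D.X n * D.z = p ^ n • ((D.z : B) * D.X n) := by
  have h0 : D.y * D.z = p⁻¹ • ((D.z : B) * D.y) := by
    rw [D.z_mul_y, smul_smul, inv_mul_cancel₀ hp, one_smul]
  have aux : ∀ (w : B) (c : K), w * D.z = c • ((D.z : B) * w) → ∀ n : ℕ,
      w ^ n * D.z = c ^ n • ((D.z : B) * w ^ n) := by
    intro w c h n
    induction n with
    | zero => simp
    | succ n ih =>
      rw [pow_succ, mul_assoc, h, mul_smul_comm, ← mul_assoc, ih, smul_mul_assoc, smul_smul,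
        mul_assoc, pow_succ, mul_comm]
  obtain ⟨n, rfl | rfl⟩ := Int.eq_nat_or_neg n
  · rw [X_natCast, zpow_natCast]; exact aux _ _ D.x_mul_z n
  · rw [X_neg_natCast, ← inv_zpow', zpow_natCast]; exact aux _ _ h0 n

/-! ### The monomial basis -/


theorem ρ_z_zpow (hp : p ≠ 0) (i : ℤ) : ∀ f b m,
    D.ρ ((D.z ^ i : Bˣ) : B) f (b, m) = p ^ (m * i) * f (b, m) := by
  induction i using Int.induction_on with
  | zero => simp
  | succ i ih =>
    intro f b m
    rw [zpow_add_one, Units.val_mul, map_mul, Module.End.mul_apply, ih, D.ρ_z, ← mul_assoc,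
      ← zpow_add₀ hp]
    ring_nf
  | pred i ih =>
    intro f b m
    have h : D.ρ ((D.z ^ (-i : ℤ) : Bˣ) : B) f (b, m) =
        p ^ m * D.ρ ((D.z ^ (-i - 1 : ℤ) : Bˣ) : B) f (b, m) := by
      rw [← D.ρ_z, ← Module.End.mul_apply, ← map_mul, ← Units.val_mul, ← zpow_one_add]
      ring_nf
    rw [ih] at h
    rw [← mul_right_inj' (zpow_ne_zero m hp), ← h, ← mul_assoc, ← zpow_add₀ hp]
    ring_nf

theorem ρ_t_zpow (hq : q ≠ 0) (k : ℤ) : ∀ f b m,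
    D.ρ ((D.t ^ k : Bˣ) : B) f (b, m) = q ^ (b * k) * f (b, m) := by
  induction k using Int.induction_on with
  | zero => simp
  | succ i ih =>
    intro f b m
    rw [zpow_add_one, Units.val_mul, map_mul, Module.End.mul_apply, ih, D.ρ_t, ← mul_assoc,
      ← zpow_add₀ hq]
    ring_nf
  | pred i ih =>
    intro f b m
    have h : D.ρ ((D.t ^ (-i : ℤ) : Bˣ) : B) f (b, m) =
        q ^ b * D.ρ ((D.t ^ (-i - 1 : ℤ) : Bˣ) : B) f (b, m) := by
      rw [← D.ρ_t, ← Module.End.mul_apply, ← map_mul, ← Units.val_mul, ← zpow_one_add]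
      ring_nf
    rw [ih] at h
    rw [← mul_right_inj' (zpow_ne_zero b hq), ← h, ← mul_assoc, ← zpow_add₀ hq]
    ring_nf

theorem ρ_s_zpow (j : ℤ) : ∀ f b m, D.ρ ((D.s ^ j : Bˣ) : B) f (b, m) = f (b + j, m) := by
  induction j using Int.induction_on with
  | zero => simp
  | succ i ih =>
    intro f b m
    rw [zpow_add_one, Units.val_mul, map_mul, Module.End.mul_apply, ih, D.ρ_s]
    ring_nf
  | pred i ih =>
    intro f b m
    have h : D.ρ ((D.s ^ (-i : ℤ) : Bˣ) : B) f (b - 1, m) =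
        D.ρ ((D.s ^ (-i - 1 : ℤ) : Bˣ) : B) f (b - 1 + 1, m) := by
      rw [← D.ρ_s (D.ρ ((D.s ^ (-i - 1 : ℤ) : Bˣ) : B) f), ← Module.End.mul_apply, ← map_mul,
        ← Units.val_mul, ← zpow_one_add]
      ring_nf
    rw [ih, sub_add_cancel] at h
    rw [← h]
    ring_nf

theorem ρ_M (hp : p ≠ 0) (hq : q ≠ 0) (g : ℤ × ℤ × ℤ) (f : ℤ × ℤ → K) (b m : ℤ) :
    D.ρ (D.M g : B) f (b, m) =
      p ^ (m * g.1) * (q ^ ((b + g.2.1) * g.2.2) * f (b + g.2.1, m)) := by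
  rw [M, Units.val_mul, Units.val_mul, map_mul, map_mul, Module.End.mul_apply,
    Module.End.mul_apply, D.ρ_z_zpow hp, D.ρ_s_zpow, D.ρ_t_zpow hq]

/-- `X n` acts as a weighted shift by `n` in the second variable. The weight of a power of `y`
is a product of factors `(p ^ r - 1) / (p - 1)`, which is nonzero far enough to the right. -/
theorem ρ_X (hp : p ≠ 0) (hpru : ∀ n : ℕ, 0 < n → p ^ n ≠ 1) (n : ℤ) :
    ∃ c : ℤ → K, (∀ m, |n| ≤ m → c m ≠ 0) ∧
      ∀ f b m, D.ρ (D.X n) f (b, m) = c m * f (b, m + n) := by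
  obtain ⟨n, rfl | rfl⟩ := Int.eq_nat_or_neg n
  · refine ⟨fun _ => 1, fun _ _ => one_ne_zero, ?_⟩
    rw [X_natCast]
    induction n with
    | zero => simp
    | succ n ih =>
      intro f b m
      rw [pow_succ, map_mul, Module.End.mul_apply, ih, D.ρ_x]
      push_cast
      ring_nf
  · rw [X_neg_natCast, abs_neg, Nat.abs_cast]
    induction n with
    | zero => exact ⟨fun _ => 1, fun _ _ => one_ne_zero, by simp⟩
    | succ n ih =>
      obtain ⟨c, hc, h⟩ := ih
      refine ⟨fun m => c m * ((p ^ (m - n) - 1) / (p - 1)), fun m hm => ?_, fun f b m => ?_⟩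
      · push_cast at hm
        refine mul_ne_zero (hc m (by omega)) (div_ne_zero (sub_ne_zero.2 fun h => ?_)
          (sub_ne_zero.2 fun h => ?_))
        · have := eq_of_zpow_eq_zpow hp hpru (h.trans (zpow_zero p).symm)
          omega
        · exact hpru 1 one_pos (by simpa using h)
      · rw [pow_succ, map_mul, Module.End.mul_apply, h, D.ρ_y]
        push_cast
        ring_nf

/-- Evaluating `ρ` of a linear relation on a delta function isolates the terms with given
exponent `j₀` of `s` and degree `n₀`. What is left is a relation between the pairwise different
characters `(m, b) ↦ (p ^ i) ^ m * (q ^ k) ^ b` of `ℕ × ℕ`, hence trivial. -/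
theorem linearIndependent_E (hp : p ≠ 0) (hq : q ≠ 0) (hpru : ∀ n : ℕ, 0 < n → p ^ n ≠ 1)
    (hqru : ∀ n : ℕ, 0 < n → q ^ n ≠ 1) : LinearIndependent K D.E := by
  classical
  rw [linearIndependent_iff]
  intro v hv
  choose c hc hX using D.ρ_X hp hpru
  ext ⟨⟨i₀, j₀, k₀⟩, n₀⟩
  by_contra hne
  rw [Finsupp.coe_zero, Pi.zero_apply] at hne
  let F := v.support.filter fun e => e.1.2.1 = j₀ ∧ e.2 = n₀
  let χ : (ℤ × ℤ × ℤ) × ℤ → (Multiplicative ℕ × Multiplicative ℕ →* K) := fun e =>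
    { toFun := fun u => (p ^ e.1.1) ^ u.1.toAdd * (q ^ e.1.2.2) ^ u.2.toAdd
      map_one' := by simp
      map_mul' := fun u w => by simp [pow_add]; ring }
  have hχ : Function.Injective fun e : F => χ e := by
    rintro ⟨⟨⟨i, j, k⟩, n⟩, he⟩ ⟨⟨⟨i', j', k'⟩, n'⟩, he'⟩ h
    have h1 := DFunLike.congr_fun h (Multiplicative.ofAdd 1, 1)
    have h2 := DFunLike.congr_fun h (1, Multiplicative.ofAdd 1)
    simp [χ] at h1 h2
    have h3 := eq_of_zpow_eq_zpow hp hpru h1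
    have h4 := eq_of_zpow_eq_zpow hq hqru h2
    simp [F] at he he'
    simp [h3, h4, he.2.1, he.2.2, he'.2.1, he'.2.2]
  have hli := (linearIndependent_monoidHom (Multiplicative ℕ × Multiplicative ℕ) K).comp _ hχ
  rw [Fintype.linearIndependent_iff] at hli
  have key := hli (fun e => v e * (p ^ (|n₀| * e.1.1.1) * q ^ (j₀ * e.1.1.2.2))) (by
    funext ⟨u₁, u₂⟩
    obtain ⟨m, rfl⟩ := Multiplicative.ofAdd.surjective u₁
    obtain ⟨b, rfl⟩ := Multiplicative.ofAdd.surjective u₂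
    -- evaluate `ρ (∑ v e • E e)` on a delta function
    have h1 := congrArg (fun a => D.ρ a (Pi.single ((b : ℤ) + j₀, |n₀| + m + n₀) 1)
      ((b : ℤ), |n₀| + m)) hv
    simp only [Finsupp.linearCombination_apply, Finsupp.sum, map_sum, map_zero, map_smul,
      LinearMap.sum_apply, Finset.sum_apply, LinearMap.smul_apply, Pi.smul_apply, E, map_mul,
      Module.End.mul_apply, D.ρ_M hp hq, hX, LinearMap.zero_apply, Pi.zero_apply] at h1
    have h2 : ∑ e ∈ F, v e * (p ^ (|n₀| * e.1.1) * q ^ (j₀ * e.1.2.2)) *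
        ((p ^ e.1.1) ^ m * (q ^ e.1.2.2) ^ b) * c n₀ (|n₀| + m) = 0 := by
      rw [← h1, Finset.sum_filter]
      refine Finset.sum_congr rfl fun e _ => ?_
      split_ifs with h
      · rw [h.1, h.2, Pi.single_eq_same, add_mul, add_mul, zpow_add₀ hp, zpow_add₀ hq,
          ← zpow_natCast, ← zpow_natCast, ← zpow_mul, ← zpow_mul, mul_comm (m : ℤ),
          mul_comm (b : ℤ), smul_eq_mul]
        ring
      · rw [Pi.single_eq_of_ne]
        · simp
        · intro h'
          simp only [Prod.mk.injEq] at h'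
          exact h ⟨by omega, by omega⟩
    rw [← Finset.sum_mul] at h2
    have h3 := (mul_eq_zero.1 h2).resolve_right (hc _ _ (by omega))
    rw [← Finset.sum_coe_sort] at h3
    simpa [χ, Finset.sum_apply] using h3)
  have h0 := key ⟨((i₀, j₀, k₀), n₀), by simp [F, hne]⟩
  simp only [mul_eq_zero, hne, false_or] at h0
  rcases h0 with h0 | h0
  · exact zpow_ne_zero _ hp h0
  · exact zpow_ne_zero _ hq h0

/-- The elements mapping the span of the family `E` into itself under left multiplication form a
subalgebra, which contains the generators of `B`. -/
theorem span_E (hp : p ≠ 0) (hp1 : p ≠ 1) (hq : q ≠ 0) :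
    Submodule.span K (Set.range D.E) = ⊤ := by
  set N := Submodule.span K (Set.range D.E) with hN
  let I : Subalgebra K B :=
    { carrier := {a | ∀ v ∈ N, a * v ∈ N}
      mul_mem' := fun {a b} ha hb v hv => by
        rw [mul_assoc]; exact ha _ (hb _ hv)
      add_mem' := fun {a b} ha hb v hv => by
        rw [add_mul]; exact N.add_mem (ha _ hv) (hb _ hv)
      algebraMap_mem' := fun r v hv => by
        rw [← Algebra.smul_def]; exact N.smul_mem _ hv }
  have hI : ∀ a : B, (∀ g n, a * ((D.M g : B) * D.X n) ∈ N) → a ∈ I := by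
    intro a h v hv
    have : N ≤ N.comap (LinearMap.mulLeft K a) := by
      rw [hN, Submodule.span_le]
      rintro _ ⟨e, rfl⟩
      exact h e.1 e.2
    exact this hv
  have hE : ∀ g n, (D.M g : B) * D.X n ∈ N := fun g n => Submodule.subset_span ⟨(g, n), rfl⟩
  have hM : ∀ g, (D.M g : B) ∈ I := by
    refine fun g => hI _ fun h n => ?_
    rw [← mul_assoc, D.M_mul hq, smul_mul_assoc]
    exact N.smul_mem _ (hE _ _)
  have hp1' : p - 1 ≠ 0 := sub_ne_zero.2 hp1
  have hyx : D.y * D.x = (p - 1)⁻¹ • ((D.z : B) - 1) := by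
    rw [D.z_eq', add_sub_cancel_right, smul_smul, inv_mul_cancel₀ hp1', one_smul]
  have hz : (D.z : B) ∈ I := by simpa [M] using hM (1, 0, 0)
  have hyxI : D.y * D.x ∈ I := by
    rw [hyx]; exact I.smul_mem (I.sub_mem hz I.one_mem) _
  have hxyI : D.x * D.y ∈ I := by
    rw [D.xy_eq]; exact I.add_mem (I.smul_mem hyxI _) I.one_mem
  have hXN : ∀ n, D.X n ∈ N := fun n => by simpa [D.M_zero] using hE 0 n
  have hxX : ∀ n, D.x * D.X n ∈ N := by
    intro n
    obtain ⟨n, rfl | rfl⟩ := Int.eq_nat_or_neg n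
    · have := hXN ((n + 1 : ℕ) : ℤ)
      rwa [X_natCast, pow_succ'] at this
    · cases n with
      | zero => simpa [D.X_zero, D.X_one] using hXN 1
      | succ n =>
        rw [X_neg_natCast, pow_succ', ← mul_assoc, ← X_neg_natCast]
        exact hxyI _ (hXN _)
  have hyX : ∀ n, D.y * D.X n ∈ N := by
    intro n
    obtain ⟨n, rfl | rfl⟩ := Int.eq_nat_or_neg n
    · cases n with
      | zero => simpa [D.X_zero, D.X_neg_one] using hXN (-1)
      | succ n =>
        rw [X_natCast, pow_succ', ← mul_assoc, ← X_natCast]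
        exact hyxI _ (hXN _)
    · have := hXN (-((n + 1 : ℕ) : ℤ))
      rwa [X_neg_natCast, pow_succ', ← X_neg_natCast] at this
  have hx : D.x ∈ I := by
    refine hI _ fun g n => ?_
    rw [← mul_assoc, D.x_mul_M hp, smul_mul_assoc, mul_assoc]
    exact N.smul_mem _ (hM g _ (hxX n))
  have hy : D.y ∈ I := by
    refine hI _ fun g n => ?_
    rw [← mul_assoc, D.y_mul_M hp, smul_mul_assoc, mul_assoc]
    exact N.smul_mem _ (hM g _ (hyX n))
  have htop : I = ⊤ := D.gen I hx hy (by simpa [M] using hM (-1, 0, 0))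
    (by simpa [M] using hM (0, 1, 0)) (by simpa [M] using hM (0, -1, 0))
    (by simpa [M] using hM (0, 0, 1)) (by simpa [M] using hM (0, 0, -1))
  rw [eq_top_iff]
  intro a _
  have ha : a ∈ I := htop ▸ Algebra.mem_top
  simpa [D.X_zero] using ha _ (hXN 0)

/-- The `K`-basis `z^i s^j t^k X n` of `B`. -/
def basisE (hp : p ≠ 0) (hq : q ≠ 0) (hpru : ∀ n : ℕ, 0 < n → p ^ n ≠ 1)
    (hqru : ∀ n : ℕ, 0 < n → q ^ n ≠ 1) : Module.Basis ((ℤ × ℤ × ℤ) × ℤ) K B :=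
  Module.Basis.mk (D.linearIndependent_E hp hq hpru hqru)
    (D.span_E hp (by simpa using hpru 1 one_pos) hq).ge

theorem basisE_apply (hp : p ≠ 0) (hq : q ≠ 0) (hpru : ∀ n : ℕ, 0 < n → p ^ n ≠ 1)
    (hqru : ∀ n : ℕ, 0 < n → q ^ n ≠ 1) (e) : D.basisE hp hq hpru hqru e = D.E e :=
  Module.Basis.mk_apply _ _ _

theorem linearIndependent_M (hp : p ≠ 0) (hq : q ≠ 0) (hpru : ∀ n : ℕ, 0 < n → p ^ n ≠ 1)
    (hqru : ∀ n : ℕ, 0 < n → q ^ n ≠ 1) : LinearIndependent K fun g => (D.M g : B) := by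
  have h := (D.linearIndependent_E hp hq hpru hqru).comp (fun g => (g, (0 : ℤ)))
    (fun g h hgh => (Prod.mk.inj hgh).1)
  simpa [Function.comp_def, E, D.X_zero] using h

/-! ### The quantum torus and homogeneous elements -/

/-- Linear combinations of the monomials `z^i s^j t^k`; the image of `L` is the quantum torus
`K⟨z^{±1}, s^{±1}, t^{±1}⟩` inside `B`. -/
def L : ((ℤ × ℤ × ℤ) →₀ K) →ₗ[K] B :=
  Finsupp.linearCombination K fun g => (D.M g : B)

theorem L_single (g : ℤ × ℤ × ℤ) (a : K) : D.L (Finsupp.single g a) = a • (D.M g : B) := by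
  simp [L]

/-- An element satisfying `v z = p ^ m z v` is homogeneous of degree `m`, that is, of the form
`r * X m` with `r` in the quantum torus. -/
theorem exists_L_mul_X (hp : p ≠ 0) (hq : q ≠ 0) (hpru : ∀ n : ℕ, 0 < n → p ^ n ≠ 1)
    (hqru : ∀ n : ℕ, 0 < n → q ^ n ≠ 1) {v : B} {m : ℤ} (hv : v * D.z = p ^ m • ((D.z : B) * v)) :
    ∃ f, v = D.L f * D.X m := by
  classical
  let b := D.basisE hp hq hpru hqru
  have hb : ∀ e, b e = D.E e := D.basisE_apply hp hq hpru hqru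
  have hsum : v = ∑ e ∈ (b.repr v).support, b.repr v e • D.E e := by
    conv_lhs => rw [← b.linearCombination_repr v, Finsupp.linearCombination_apply, Finsupp.sum]
    simp only [hb]
  have hEz : ∀ e, D.E e * D.z = p ^ e.2 • ((D.z : B) * D.E e) := by
    intro e
    rw [E, mul_assoc, D.X_mul_z hp, mul_smul_comm, ← mul_assoc, ← D.z_mul_M, mul_assoc]
  have h0 : (D.z : B) * ∑ e ∈ (b.repr v).support,
      (b.repr v e * (p ^ e.2 - p ^ m)) • D.E e = 0 := by
    rw [← sub_eq_zero, hsum, Finset.sum_mul, Finset.mul_sum, Finset.smul_sum,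
      ← Finset.sum_sub_distrib] at hv
    rw [← hv, Finset.mul_sum]
    refine Finset.sum_congr rfl fun e _ => ?_
    rw [smul_mul_assoc, hEz, mul_smul_comm, mul_smul_comm]
    module
  rw [Units.mul_right_eq_zero] at h0
  have h1 := linearIndependent_iff'.1 (D.linearIndependent_E hp hq hpru hqru) _ _ h0
  have h2 : ∀ e ∈ (b.repr v).support, e.2 = m := by
    intro e he
    have := (mul_eq_zero.1 (h1 e he)).resolve_left (Finsupp.mem_support_iff.1 he)
    exact eq_of_zpow_eq_zpow hp hpru (sub_eq_zero.1 this)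
  have h3 : v ∈ LinearMap.range ((LinearMap.mulRight K (D.X m)).comp D.L) := by
    rw [hsum]
    refine Submodule.sum_mem _ fun e he => Submodule.smul_mem _ _ ⟨Finsupp.single e.1 1, ?_⟩
    simp [L_single, E, h2 e he]
  obtain ⟨f, hf⟩ := h3
  exact ⟨f, hf.symm⟩


theorem M_smul_inj {g : ℤ × ℤ × ℤ} {a b : K} (h : a • (D.M g : B) = b • (D.M g : B)) : a = b := by
  have := D.nontriv
  exact smul_left_injective K (D.M g).ne_zero h

theorem z_mul_L (f) : (D.z : B) * D.L f = D.L f * D.z := by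
  induction f using Finsupp.induction_linear with
  | zero => simp
  | add f g hf hg => rw [map_add, mul_add, add_mul, hf, hg]
  | single g a =>
    rw [L_single, mul_smul_comm, smul_mul_assoc, D.z_mul_M]

theorem exists_y_mul_L (hp : p ≠ 0) (f) : ∃ f', D.L f * D.y = D.y * D.L f' := by
  induction f using Finsupp.induction_linear with
  | zero => exact ⟨0, by simp⟩
  | add f g hf hg =>
    obtain ⟨f', hf⟩ := hf
    obtain ⟨g', hg⟩ := hg
    exact ⟨f' + g', by rw [map_add, map_add, mul_add, add_mul, hf, hg]⟩
  | single g a =>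
    refine ⟨Finsupp.single g (p ^ g.1 * a), ?_⟩
    rw [L_single, L_single, mul_smul_comm, y_mul_M D hp, smul_mul_assoc, smul_smul,
      mul_right_comm, ← zpow_add₀ hp]
    simp

theorem exists_eq_smul_M (hp : p ≠ 0) (hq : q ≠ 0) (hpru : ∀ n : ℕ, 0 < n → p ^ n ≠ 1)
    (hqru : ∀ n : ℕ, 0 < n → q ^ n ≠ 1) {f f'} (h : D.L f * D.L f' = 1) :
    ∃ (g : ℤ × ℤ × ℤ) (a : K), a ≠ 0 ∧ D.L f = a • (D.M g : B) :=
  twisted_unit_monomial (M := fun g => (D.M g : B)) (D.M_mul hq) (fun _ _ => zpow_ne_zero _ hq)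
    (D.linearIndependent_M hp hq hpru hqru) f f' (by rw [D.M_zero]; exact h)

/-- If `u v = 1` and both `u` and `v` commute with `z`, then they lie in the quantum torus, so
that `u` is a scalar multiple of a monomial. -/
theorem exists_smul_M_of_commute (hp : p ≠ 0) (hq : q ≠ 0) (hpru : ∀ n : ℕ, 0 < n → p ^ n ≠ 1)
    (hqru : ∀ n : ℕ, 0 < n → q ^ n ≠ 1) {u v : B} (hu : u * D.z = D.z * u)
    (hv : v * D.z = D.z * v) (h : u * v = 1) :
    ∃ (g : ℤ × ℤ × ℤ) (a : K), a ≠ 0 ∧ u = a • (D.M g : B) := by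
  obtain ⟨f, hf⟩ := D.exists_L_mul_X hp hq hpru hqru (m := 0) (by simpa using hu)
  obtain ⟨f', hf'⟩ := D.exists_L_mul_X hp hq hpru hqru (m := 0) (by simpa using hv)
  rw [X_zero, mul_one] at hf hf'
  subst hf hf'
  exact D.exists_eq_smul_M hp hq hpru hqru h

/-! ### Endomorphisms sending generators to monomials -/

/-- `a` is a nonzero scalar multiple of the basis element `M g * X n`. -/
def IsMono (g : ℤ × ℤ × ℤ) (n : ℤ) (a : B) : Prop :=
  ∃ c : K, c ≠ 0 ∧ a = c • ((D.M g : B) * D.X n)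

variable {D}

theorem IsMono.mul (hq : q ≠ 0) {g h : ℤ × ℤ × ℤ} {n : ℤ} {a b : B} (ha : D.IsMono g 0 a)
    (hb : D.IsMono h n b) : D.IsMono (g + h) n (a * b) := by
  obtain ⟨c, hc, rfl⟩ := ha
  obtain ⟨d, hd, rfl⟩ := hb
  refine ⟨c * d * q ^ (-(g.2.2 * h.2.1)), mul_ne_zero (mul_ne_zero hc hd) (zpow_ne_zero _ hq), ?_⟩
  rw [X_zero, mul_one, smul_mul_smul_comm, ← mul_assoc, D.M_mul hq, smul_mul_assoc, smul_smul]

theorem IsMono.pow (hq : q ≠ 0) {g : ℤ × ℤ × ℤ} {a : B} (ha : D.IsMono g 0 a) (n : ℕ) :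
    D.IsMono (n • g) 0 (a ^ n) := by
  induction n with
  | zero => exact ⟨1, one_ne_zero, by simp [D.M_zero, D.X_zero]⟩
  | succ n ih => rw [pow_succ', succ_nsmul']; exact ha.mul hq ih

theorem IsMono.inv (hq : q ≠ 0) {g : ℤ × ℤ × ℤ} {u : Bˣ} (hu : D.IsMono g 0 (u : B)) :
    D.IsMono (-g) 0 ((u⁻¹ : Bˣ) : B) := by
  obtain ⟨c, hc, h⟩ := hu
  rw [X_zero, mul_one] at h
  refine ⟨c⁻¹ * q ^ (-(g.2.2 * g.2.1)), mul_ne_zero (inv_ne_zero hc) (zpow_ne_zero _ hq), ?_⟩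
  rw [X_zero, mul_one, Units.inv_eq_of_mul_eq_one_right]
  rw [h, smul_mul_smul_comm, D.M_mul hq, add_neg_cancel, M_zero, Units.val_one, smul_smul,
    ← mul_assoc, mul_inv_cancel₀ hc, one_mul, ← zpow_add₀ hq]
  simp

theorem IsMono.zpow (hq : q ≠ 0) {g : ℤ × ℤ × ℤ} {u : Bˣ} (hu : D.IsMono g 0 (u : B)) (n : ℤ) :
    D.IsMono (n • g) 0 ((u ^ n : Bˣ) : B) := by
  obtain ⟨n, rfl | rfl⟩ := Int.eq_nat_or_neg n
  · simpa using hu.pow hq n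
  · rw [zpow_neg, neg_smul]
    refine IsMono.inv hq ?_
    simpa using hu.pow hq n

theorem IsMono.map_X (hp : p ≠ 0) (hq : q ≠ 0) {g : ℤ × ℤ × ℤ} (φ : B →ₐ[K] B)
    (hx : D.IsMono g 1 (φ D.x)) (hy : D.IsMono (-g) (-1) (φ D.y)) (n : ℤ) :
    D.IsMono (n • g) n (φ (D.X n)) := by
  obtain ⟨n, rfl | rfl⟩ := Int.eq_nat_or_neg n
  · rw [X_natCast, map_pow]
    induction n with
    | zero => exact ⟨1, one_ne_zero, by simp [D.M_zero, D.X_zero]⟩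
    | succ n ih =>
      obtain ⟨c, hc, h1⟩ := ih
      obtain ⟨d, hd, h2⟩ := hx
      rw [X_one] at h2
      have h3 : D.IsMono ((n : ℤ) • g) (n + 1 : ℕ) (D.x * φ D.x ^ n) := by
        refine ⟨c * p ^ ((n : ℤ) • g).1, mul_ne_zero hc (zpow_ne_zero _ hp), ?_⟩
        rw [h1, mul_smul_comm, ← mul_assoc, D.x_mul_M hp, smul_mul_assoc, mul_assoc, smul_smul,
          X_natCast, X_natCast, pow_succ']
      have h4 : D.IsMono g 0 (d • (D.M g : B)) := ⟨d, hd, by rw [X_zero, mul_one]⟩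
      have h5 := h4.mul hq h3
      rw [← mul_assoc, smul_mul_assoc, ← h2, ← pow_succ'] at h5
      convert h5 using 1
      push_cast
      rw [add_smul, one_smul, add_comm]
  · rw [X_neg_natCast, map_pow]
    induction n with
    | zero => exact ⟨1, one_ne_zero, by simp [D.M_zero, D.X_zero]⟩
    | succ n ih =>
      obtain ⟨c, hc, h1⟩ := ih
      obtain ⟨d, hd, h2⟩ := hy
      rw [X_neg_one] at h2
      have h3 : D.IsMono ((-n : ℤ) • g) (-(n + 1 : ℕ)) (D.y * φ D.y ^ n) := by
        refine ⟨c * p ^ (-((-n : ℤ) • g).1), mul_ne_zero hc (zpow_ne_zero _ hp), ?_⟩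
        rw [h1, mul_smul_comm, ← mul_assoc, D.y_mul_M hp, smul_mul_assoc, mul_assoc, smul_smul,
          X_neg_natCast, X_neg_natCast, pow_succ']
      have h4 : D.IsMono (-g) 0 (d • (D.M (-g) : B)) := ⟨d, hd, by rw [X_zero, mul_one]⟩
      have h5 := h4.mul hq h3
      rw [← mul_assoc, smul_mul_assoc, ← h2, ← pow_succ'] at h5
      convert h5 using 1
      push_cast
      rw [neg_add, add_smul, neg_smul, neg_smul, one_smul, add_comm]

variable (D)

/-- The linear map induced on exponents by an endomorphism with `s ↦ M u`, `t ↦ M v`,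
`x ↦ M w * x` up to scalars and `z ↦ z`; it is invertible over `ℤ` because the `(s, t)`-block
of `u` and `v` has determinant `1`. -/
def expEquiv (u v w : ℤ × ℤ × ℤ) (hdet : u.2.1 * v.2.2 - u.2.2 * v.2.1 = 1) :
    ((ℤ × ℤ × ℤ) × ℤ) ≃ ((ℤ × ℤ × ℤ) × ℤ) where
  toFun e := (e.1.1 • (1, 0, 0) + e.1.2.1 • u + e.1.2.2 • v + e.2 • w, e.2)
  invFun e :=
    let b := v.2.2 * (e.1.2.1 - e.2 * w.2.1) - v.2.1 * (e.1.2.2 - e.2 * w.2.2)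
    let c := u.2.1 * (e.1.2.2 - e.2 * w.2.2) - u.2.2 * (e.1.2.1 - e.2 * w.2.1)
    ((e.1.1 - b * u.1 - c * v.1 - e.2 * w.1, b, c), e.2)
  left_inv := by
    obtain ⟨u1, u2, u3⟩ := u
    obtain ⟨v1, v2, v3⟩ := v
    obtain ⟨w1, w2, w3⟩ := w
    rintro ⟨⟨a, b, c⟩, n⟩
    dsimp at hdet
    simp only [Prod.smul_mk, smul_eq_mul, Prod.mk_add_mk, Prod.mk.injEq, and_true]
    refine ⟨?_, ?_, ?_⟩
    · linear_combination (-b * u1 - c * v1) * hdet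
    · linear_combination b * hdet
    · linear_combination c * hdet
  right_inv := by
    obtain ⟨u1, u2, u3⟩ := u
    obtain ⟨v1, v2, v3⟩ := v
    obtain ⟨w1, w2, w3⟩ := w
    rintro ⟨⟨a, b, c⟩, n⟩
    dsimp at hdet
    simp only [Prod.smul_mk, smul_eq_mul, Prod.mk_add_mk, Prod.mk.injEq, and_true]
    refine ⟨?_, ?_, ?_⟩
    · ring
    · linear_combination (b - n * w2) * hdet
    · linear_combination (c - n * w3) * hdet

/-- An endomorphism sending the generators to monomials permutes the basis `E` up to nonzero
scalars, by `expEquiv`. -/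
theorem bijective_of_isMono (hp : p ≠ 0) (hq : q ≠ 0) (hpru : ∀ n : ℕ, 0 < n → p ^ n ≠ 1)
    (hqru : ∀ n : ℕ, 0 < n → q ^ n ≠ 1) (φ : B →ₐ[K] B) {u v w : ℤ × ℤ × ℤ}
    (hdet : u.2.1 * v.2.2 - u.2.2 * v.2.1 = 1)
    (hz : φ D.z = D.z) (hs : D.IsMono u 0 (φ D.s)) (ht : D.IsMono v 0 (φ D.t))
    (hx : D.IsMono w 1 (φ D.x)) (hy : D.IsMono (-w) (-1) (φ D.y)) : Function.Bijective φ := by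
  have hz' : D.IsMono (1, 0, 0) 0 (φ D.z) := ⟨1, one_ne_zero, by simp [hz, M, D.X_zero]⟩
  have hmap : ∀ (u : Bˣ) (n : ℤ), φ ((u ^ n : Bˣ) : B) = ((Units.map (φ : B →* B) u ^ n : Bˣ) : B) :=
    fun u n => by rw [← map_zpow]; rfl
  have key : ∀ e, ∃ c : Kˣ, φ (D.E e) = c • D.E (expEquiv u v w hdet e) := by
    intro e
    have h1 := IsMono.zpow (u := Units.map (φ : B →* B) D.z) hq hz' e.1.1
    have h2 := IsMono.zpow (u := Units.map (φ : B →* B) D.s) hq hs e.1.2.1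
    have h3 := IsMono.zpow (u := Units.map (φ : B →* B) D.t) hq ht e.1.2.2
    have h4 := IsMono.map_X hp hq φ hx hy e.2
    have h5 := ((h1.mul hq h2).mul hq h3).mul hq h4
    rw [← hmap, ← hmap, ← hmap, ← map_mul, ← map_mul, ← map_mul] at h5
    obtain ⟨c, hc, h⟩ := h5
    exact ⟨Units.mk0 c hc, h⟩
  choose c hc using key
  let b := D.basisE hp hq hpru hqru
  let b' := (b.reindex (expEquiv u v w hdet).symm).unitsSMul c
  have : (φ : B →ₗ[K] B) = (b.equiv b' (Equiv.refl _) : B →ₗ[K] B) := by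
    refine b.ext fun e => ?_
    rw [LinearEquiv.coe_coe, Module.Basis.equiv_apply]
    simp only [Equiv.refl_apply, b', Module.Basis.unitsSMul_apply, Module.Basis.reindex_apply, Equiv.symm_symm, b, basisE_apply]
    exact hc e
  have h2 : (φ : B → B) = b.equiv b' (Equiv.refl _) := congrArg DFunLike.coe this
  rw [h2]
  exact LinearEquiv.bijective _

/-! ### Endomorphisms of positive type -/

/-- The form of the endomorphisms of positive type, in an algebra described by `QWeylData`. -/
theorem main (hp : p ≠ 0) (hq : q ≠ 0) (hpru : ∀ n : ℕ, 0 < n → p ^ n ≠ 1)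
    (hqru : ∀ n : ℕ, 0 < n → q ^ n ≠ 1) (φ : B →ₐ[K] B) {α : K} (hα : α ≠ 0)
    (hz : φ D.z = α • (D.z : B)) :
    Function.Bijective φ ∧
    ∃ (α β γ : Kˣ) (i j k m n c d e f : ℤ),
      p ^ m * q ^ (d * j - c * k) = 1 ∧
      p ^ n * q ^ (f * j - e * k) = 1 ∧
      c * f - d * e = 1 ∧
      φ D.z = D.z ∧
      φ D.x = (α : K) • (((D.z ^ i * D.s ^ j * D.t ^ k : Bˣ) : B) * D.x) ∧
      φ D.y = ((α : K)⁻¹ * p ^ i * q ^ (-(j * k))) •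
          (((D.z ^ (-i) * D.s ^ (-j) * D.t ^ (-k) : Bˣ) : B) * D.y) ∧
      φ D.s = (β : K) • ((D.z ^ m * D.s ^ c * D.t ^ d : Bˣ) : B) ∧
      φ D.t = (γ : K) • ((D.z ^ n * D.s ^ e * D.t ^ f : Bˣ) : B) := by
  have hp1 : p - 1 ≠ 0 := sub_ne_zero.2 (by simpa using hpru 1 one_pos)
  -- a relation `v z = r z v` is preserved by `φ`, since the scalar `α` cancels
  have hcomm : ∀ (v : B) (r : K), v * D.z = r • ((D.z : B) * v) →
      φ v * D.z = r • ((D.z : B) * φ v) := by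
    intro v r h
    have h1 := congrArg φ h
    rw [map_mul, map_smul, map_mul, hz, mul_smul_comm, smul_mul_assoc, smul_comm r] at h1
    exact (smul_right_injective B hα) h1
  have hcomm' : ∀ u : Bˣ, (D.z : B) * u = u * D.z →
      ∃ (g : ℤ × ℤ × ℤ) (a : K), a ≠ 0 ∧ φ u = a • (D.M g : B) := by
    intro u hu
    have hu' : Commute D.z u⁻¹ := Commute.inv_right (Units.ext hu)
    have h1 := hcomm u 1 (by rw [one_smul, hu])
    have h2 := hcomm (u⁻¹ : Bˣ) 1 (by
      rw [one_smul]; exact congrArg Units.val hu'.eq.symm)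
    rw [one_smul] at h1 h2
    exact D.exists_smul_M_of_commute hp hq hpru hqru h1 h2 (by rw [← map_mul]; simp)
  obtain ⟨⟨m, c, d⟩, β, hβ, hs⟩ := hcomm' D.s D.z_mul_s
  obtain ⟨⟨n, e, f⟩, γ, hγ, ht⟩ := hcomm' D.t D.z_mul_t
  obtain ⟨g, hx⟩ := D.exists_L_mul_X hp hq hpru hqru (m := 1) (v := φ D.x)
    (hcomm _ _ (by rw [zpow_one]; exact D.x_mul_z))
  obtain ⟨h₀, hy₀⟩ := D.exists_L_mul_X hp hq hpru hqru (m := -1) (v := φ D.y)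
    (hcomm _ _ (by
      rw [zpow_neg_one, D.z_mul_y, smul_smul, inv_mul_cancel₀ hp, one_smul]))
  rw [X_one] at hx
  rw [X_neg_one] at hy₀
  obtain ⟨h, hy⟩ := D.exists_y_mul_L hp h₀
  rw [← hy₀] at hy
  clear hy₀ h₀
  have hxy : (p - 1) • (D.x * D.y) = p • (D.z : B) - 1 := by
    rw [D.z_eq', D.xy_eq]; module
  have hw : D.L g * D.L h * (p • (D.z : B) - 1) = (p * α) • (D.z : B) - 1 := by
    have h1 := congrArg φ hxy
    rw [map_smul, map_mul, map_sub, map_smul, hz, map_one, hx, hy, smul_smul] at h1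
    rw [← h1]
    calc D.L g * D.L h * (p • (D.z : B) - 1) = D.L g * ((p • (D.z : B) - 1) * D.L h) := by
          rw [mul_assoc, mul_sub, sub_mul, mul_smul_comm, smul_mul_assoc, D.z_mul_L, one_mul,
            mul_one]
      _ = _ := by
          rw [← hxy]
          simp only [smul_mul_assoc, mul_smul_comm, mul_assoc]
  -- `z` acts by `p⁻¹` on the delta function at `(0, -1)`, so `p z - 1` kills it, and by `hw`
  -- so does `p α z - 1`, which acts on it by `α - 1`
  have hα1 : α = 1 := by
    have h1 := congrArg (fun a => D.ρ a (Pi.single ((0 : ℤ), (-1 : ℤ)) 1) (0, -1)) hw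
    have h0 : D.ρ (p • (D.z : B) - 1) (Pi.single ((0 : ℤ), (-1 : ℤ)) 1) = 0 := by
      funext ⟨b, n⟩
      simp only [map_sub, map_smul, map_one, LinearMap.sub_apply, LinearMap.smul_apply,
        Pi.sub_apply, Pi.smul_apply, D.ρ_z, Module.End.one_apply, smul_eq_mul, Pi.zero_apply]
      by_cases hbn : (b, n) = ((0 : ℤ), (-1 : ℤ))
      · obtain ⟨rfl, rfl⟩ := Prod.mk.inj hbn
        simp [hp]
      · simp [Pi.single_eq_of_ne hbn]
    rw [map_mul, Module.End.mul_apply, h0] at h1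
    simp only [map_sub, map_smul, map_one, map_zero, LinearMap.sub_apply, LinearMap.smul_apply,
        Pi.sub_apply, Pi.smul_apply, D.ρ_z, Module.End.one_apply, smul_eq_mul, Pi.zero_apply,
        Pi.single_eq_same, zpow_neg_one, mul_one] at h1
    rw [mul_right_comm, mul_inv_cancel₀ hp, one_mul] at h1
    exact (sub_eq_zero.1 h1.symm)
  subst hα1
  rw [one_smul] at hz
  -- with `α = 1`, the factor `p z - 1` can be cancelled in `hw`, as the quantum torus is a domain
  have hgh : D.L g * D.L h = 1 := by
    obtain ⟨w, hw'⟩ : ∃ w, D.L g * D.L h = D.L w := ⟨_, twisted_linearCombination_mul (D.M_mul hq) g h⟩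
    rw [hw'] at hw ⊢
    have h1 : D.L (w - Finsupp.single 0 1) *
        D.L (Finsupp.single (1, 0, 0) p - Finsupp.single 0 1) = 0 := by
      have e1 : (D.M (1, 0, 0) : B) = D.z := by simp [M]
      rw [map_sub, map_sub, L_single, L_single, M_zero, e1, one_smul, Units.val_one, sub_mul, hw]
      simp
    rcases twisted_eq_zero_or_eq_zero (D.M_mul hq) (fun _ _ => zpow_ne_zero _ hq)
      (D.linearIndependent_M hp hq hpru hqru) _ _ h1 with h2 | h2
    · rw [sub_eq_zero.1 h2, L_single, M_zero, one_smul, Units.val_one]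
    · have := DFunLike.congr_fun h2 0
      simp at this
  obtain ⟨⟨i, j, k⟩, a, ha, hg⟩ := D.exists_eq_smul_M hp hq hpru hqru hgh
  have hh : D.L h = (a⁻¹ * q ^ (-(j * k))) • (D.M (-(i, j, k)) : B) := by
    have h1 : a • ((D.M (i, j, k) : B) * D.L h) =
        a • ((D.M (i, j, k) : B) * ((a⁻¹ * q ^ (-(j * k))) • (D.M (-(i, j, k)) : B))) := by
      rw [← smul_mul_assoc, ← hg, hgh, mul_smul_comm, D.M_mul hq, add_neg_cancel, M_zero,
        smul_smul, smul_smul, ← mul_assoc, mul_inv_cancel₀ ha, one_mul, ← zpow_add₀ hq]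
      simp [mul_comm]
    exact (Units.mul_right_inj _).1 ((smul_right_injective B ha) h1)
  have hX : φ D.x = a • ((D.M (i, j, k) : B) * D.x) := by rw [hx, hg, smul_mul_assoc]
  have hY : φ D.y = (a⁻¹ * p ^ i * q ^ (-(j * k))) • ((D.M (-(i, j, k)) : B) * D.y) := by
    rw [hy, hh, mul_smul_comm, D.y_mul_M hp, smul_smul]
    congr 1
    simp
    ring
  have hst : c * f - d * e = 1 := by
    have h1 := congrArg φ D.st
    rw [map_mul, map_smul, map_mul, hs, ht, smul_mul_smul_comm, smul_mul_smul_comm, D.M_mul hq,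
      D.M_mul hq, add_comm (n, e, f), smul_smul, smul_smul, smul_smul] at h1
    have h2 := D.M_smul_inj h1
    dsimp only at h2
    have h3 : q ^ (-(d * e)) = q ^ (1 + -(f * c)) := by
      rw [zpow_one_add₀ hq]
      apply mul_left_cancel₀ (mul_ne_zero hβ hγ)
      rw [h2]; ring
    have h4 := eq_of_zpow_eq_zpow hq hqru h3
    linarith [mul_comm f c]
  -- the relation obtained from the commutation of `x` with a unit mapped to a monomial
  have hrel : ∀ (u : B) (r : K) (m c d : ℤ), r ≠ 0 → u * D.x = D.x * u →
      φ u = r • (D.M (m, c, d) : B) → p ^ m * q ^ (d * j - c * k) = 1 := by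
    intro u r m c d hr hu hφ
    have h1 := congrArg φ hu
    rw [map_mul, map_mul, hφ, hX, smul_mul_smul_comm, smul_mul_smul_comm, ← mul_assoc,
      D.M_mul hq, mul_assoc _ D.x, D.x_mul_M hp, mul_smul_comm, ← mul_assoc, D.M_mul hq,
      add_comm (i, j, k)] at h1
    simp only [smul_mul_assoc, smul_smul] at h1
    have h2 : ((D.M ((m, c, d) + (i, j, k)) : B) * D.x) ≠ 0 := by
      have h3 := (D.linearIndependent_E hp hq hpru hqru).ne_zero ((m, c, d) + (i, j, k), 1)
      simpa [E, X_one] using h3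
    have h4 := smul_left_injective K h2 h1
    have h5 : q ^ (-(d * j)) = p ^ m * q ^ (-(k * c)) := by
      apply mul_left_cancel₀ (mul_ne_zero hr ha)
      rw [h4]; ring
    calc p ^ m * q ^ (d * j - c * k) = (p ^ m * q ^ (-(k * c))) * q ^ (d * j) := by
          rw [mul_assoc, ← zpow_add₀ hq]; congr 2; ring
      _ = 1 := by rw [← h5, ← zpow_add₀ hq]; simp
  refine ⟨?_, Units.mk0 a ha, Units.mk0 β hβ, Units.mk0 γ hγ, i, j, k, m, n, c, d, e, f,
    hrel _ _ _ _ _ hβ D.sx hs, hrel _ _ _ _ _ hγ D.tx ht, hst, hz, hX, hY, hs, ht⟩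
  refine D.bijective_of_isMono hp hq hpru hqru φ (u := (m, c, d)) (v := (n, e, f))
    (w := (i, j, k)) hst hz ⟨β, hβ, by rw [hs, X_zero, mul_one]⟩
    ⟨γ, hγ, by rw [ht, X_zero, mul_one]⟩ ⟨a, ha, by rw [hX, X_one]⟩ ⟨_, ?_, by rw [X_neg_one]; exact hY⟩
  exact mul_ne_zero (mul_ne_zero (inv_ne_zero ha) (zpow_ne_zero _ hp)) (zpow_ne_zero _ hq)

end QWeylData

/-! ### The localization and its representation -/

section Model

/-- The operator `f ↦ c · (f ∘ σ)` on functions on `ℤ × ℤ`. -/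
def weightedShift (c : ℤ × ℤ → K) (σ : ℤ × ℤ → ℤ × ℤ) : Module.End K (ℤ × ℤ → K) where
  toFun f v := c v * f (σ v)
  map_add' f g := by funext v; simp [mul_add]
  map_smul' a f := by funext v; simp; ring

theorem weightedShift_apply (c : ℤ × ℤ → K) (σ : ℤ × ℤ → ℤ × ℤ) (f : ℤ × ℤ → K) (v : ℤ × ℤ) :
    weightedShift K c σ f v = c v * f (σ v) := rfl

/-- The operators by which `x, y, s, t` act, in this order, on functions of `(b, n)`. -/
def genOp : Fin 4 → Module.End K (ℤ × ℤ → K) :=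
  ![weightedShift K (fun _ => 1) fun v => (v.1, v.2 + 1),
    weightedShift K (fun v => (p ^ v.2 - 1) / (p - 1)) fun v => (v.1, v.2 - 1),
    weightedShift K (fun _ => 1) fun v => (v.1 + 1, v.2),
    weightedShift K (fun v => q ^ v.1) id]

theorem genOp_weyl (hp : p ≠ 0) (hp1 : p ≠ 1) :
    genOp K p q 0 * genOp K p q 1 - p • (genOp K p q 1 * genOp K p q 0) = 1 := by
  have hp1' : p - 1 ≠ 0 := sub_ne_zero.2 hp1
  refine LinearMap.ext fun f => funext fun v => ?_
  simp [genOp, weightedShift_apply, zpow_add_one₀ hp]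
  field_simp
  ring

/-- The commutator `xy - yx` acts diagonally. -/
theorem genOp_z (hp : p ≠ 0) (hp1 : p ≠ 1) :
    genOp K p q 0 * genOp K p q 1 - genOp K p q 1 * genOp K p q 0 =
      weightedShift K (fun v => p ^ v.2) id := by
  have hp1' : p - 1 ≠ 0 := sub_ne_zero.2 hp1
  refine LinearMap.ext fun f => funext fun v => ?_
  simp [genOp, weightedShift_apply, zpow_add_one₀ hp]
  field_simp
  ring

/-- The representation of `A` on the functions on `ℤ × ℤ`. -/
def repA (hp : p ≠ 0) (hp1 : p ≠ 1) (hq : q ≠ 0) :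
    ExtWeyl K p q 1 1 →ₐ[K] Module.End K (ℤ × ℤ → K) :=
  RingQuot.liftAlgHom K ⟨FreeAlgebra.lift K (genOp K p q), by
    intro a b h
    induction h with
    | weyl => simpa using genOp_weyl K p q hp hp1
    | st =>
      refine LinearMap.ext fun f => funext fun v => ?_
      simp [genOp, weightedShift_apply, zpow_add_one₀ hq]
      ring
    | sx | sy | tx | ty =>
      refine LinearMap.ext fun f => funext fun v => ?_
      simp [genOp, weightedShift_apply]
      try ring⟩

theorem repA_ι (hp : p ≠ 0) (hp1 : p ≠ 1) (hq : q ≠ 0) (i : Fin 4) :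
    repA K p q hp hp1 hq (RingQuot.mkAlgHom K _ (ι K i)) = genOp K p q i := by
  simp [repA]

theorem repA_wz (hp : p ≠ 0) (hp1 : p ≠ 1) (hq : q ≠ 0) :
    repA K p q hp hp1 hq (wz K p q) = weightedShift K (fun v => p ^ v.2) id := by
  rw [← genOp_z K p q hp hp1, wz, wx, wy, map_sub, map_mul, map_mul, repA_ι, repA_ι]

theorem isUnit_weightedShift (c : ℤ × ℤ → K) (hc : ∀ v, c v ≠ 0) (σ : ℤ × ℤ ≃ ℤ × ℤ) :
    IsUnit (weightedShift K c σ) := by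
  refine ⟨⟨weightedShift K c σ, weightedShift K (fun v => (c (σ.symm v))⁻¹) σ.symm, ?_, ?_⟩, rfl⟩
  · refine LinearMap.ext fun f => funext fun v => ?_
    simp [weightedShift_apply, hc]
  · refine LinearMap.ext fun f => funext fun v => ?_
    simp [weightedShift_apply, hc]

theorem isUnit_repA (hp : p ≠ 0) (hp1 : p ≠ 1) (hq : q ≠ 0) (a : locS K p q) :
    IsUnit (repA K p q hp hp1 hq a) := by
  have h : locS K p q ≤ (IsUnit.submonoid (Module.End K (ℤ × ℤ → K))).comap
      (repA K p q hp hp1 hq : ExtWeyl K p q 1 1 →* Module.End K (ℤ × ℤ → K)) := by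
    rw [locS, Submonoid.closure_le]
    rintro _ (rfl | rfl | rfl)
    · change IsUnit (repA K p q hp hp1 hq (wz K p q))
      rw [repA_wz]
      exact isUnit_weightedShift K _ (fun v => zpow_ne_zero _ hp) (Equiv.refl _)
    · change IsUnit (repA K p q hp hp1 hq (ws K p q))
      rw [ws, repA_ι]
      exact isUnit_weightedShift K _ (fun v => one_ne_zero)
        ((Equiv.addRight (1 : ℤ)).prodCongr (Equiv.refl ℤ))
    · change IsUnit (repA K p q hp hp1 hq (wt K p q))
      rw [wt, repA_ι]
      exact isUnit_weightedShift K _ (fun v => zpow_ne_zero _ hq) (Equiv.refl _)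
  exact h a.2

/-- The canonical map `A → A_S` as a `K`-algebra homomorphism. -/
def numAlgHom : ExtWeyl K p q 1 1 →ₐ[K] ALoc K p q :=
  { OreLocalization.numeratorRingHom with commutes' := fun _ => rfl }

/-- The extension of `repA` to `A_S`, which exists as `z, s, t` act invertibly. -/
def repLoc (hp : p ≠ 0) (hp1 : p ≠ 1) (hq : q ≠ 0) :
    ALoc K p q →ₐ[K] Module.End K (ℤ × ℤ → K) :=
  { OreLocalization.universalHom (repA K p q hp hp1 hq : _ →+* _)
      (IsUnit.liftRight ((repA K p q hp hp1 hq : _ →* _).comp (locS K p q).subtype)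
        (isUnit_repA K p q hp hp1 hq)) (fun _ => rfl) with
    commutes' := fun r =>
      (OreLocalization.universalHom_commutes _ _ _).trans
        ((repA K p q hp hp1 hq).commutes r) }

theorem repLoc_num (hp : p ≠ 0) (hp1 : p ≠ 1) (hq : q ≠ 0) (a : ExtWeyl K p q 1 1) :
    repLoc K p q hp hp1 hq (numAlgHom K p q a) = repA K p q hp hp1 hq a :=
  OreLocalization.universalHom_commutes _ _ _

theorem mk_rel {a b : FreeAlgebra K (Fin 4)} (h : ExtWeylRel K p q 1 1 a b) :
    numAlgHom K p q (RingQuot.mkAlgHom K _ a) = numAlgHom K p q (RingQuot.mkAlgHom K _ b) :=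
  congrArg _ (RingQuot.mkAlgHom_rel K h)

/-- A left fraction with denominator in `S` is a product of inverses of `z, s, t` with an element
of `A`, so `A_S` is generated by `x, y, s, t` and the inverses of `z, s, t`. -/
theorem aloc_gen (N : Subalgebra K (ALoc K p q)) (hx : lx K p q ∈ N) (hy : ly K p q ∈ N)
    (hz' : (((uz K p q)⁻¹ : (ALoc K p q)ˣ) : ALoc K p q) ∈ N) (hs : ls K p q ∈ N)
    (hs' : (((us K p q)⁻¹ : (ALoc K p q)ˣ) : ALoc K p q) ∈ N) (ht : lt K p q ∈ N)
    (ht' : (((ut K p q)⁻¹ : (ALoc K p q)ˣ) : ALoc K p q) ∈ N) : N = ⊤ := by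
  have hnum : ∀ a, numAlgHom K p q a ∈ N := by
    intro a
    obtain ⟨a, rfl⟩ := RingQuot.mkAlgHom_surjective K _ a
    induction a using FreeAlgebra.induction with
    | grade0 r => rw [AlgHom.commutes, AlgHom.commutes]; exact N.algebraMap_mem r
    | grade1 i =>
      fin_cases i
      exacts [hx, hy, hs, ht]
    | mul a b ha hb => rw [map_mul, map_mul]; exact N.mul_mem ha hb
    | add a b ha hb => rw [map_add, map_add]; exact N.add_mem ha hb
  have hinv : ∀ a (ha : a ∈ locS K p q),
      OreLocalization.oreDiv (1 : ExtWeyl K p q 1 1) (⟨a, ha⟩ : locS K p q) ∈ N := by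
    intro a ha
    induction ha using Submonoid.closure_induction with
    | mem a h =>
      rcases h with rfl | rfl | rfl
      exacts [hz', hs', ht']
    | one =>
      have h := N.one_mem
      rw [OreLocalization.one_def] at h
      exact h
    | mul a b ha hb iha ihb =>
      have := N.mul_mem ihb iha
      rwa [OreLocalization.one_div_mul] at this
  rw [eq_top_iff]
  rintro a -
  induction a using OreLocalization.ind with
  | _ r s =>
    have := N.mul_mem (hinv s s.2) (hnum r)
    change _ * OreLocalization.oreDiv r 1 ∈ N at this
    rwa [OreLocalization.mul_div_one, one_mul] at this

/-- The localization `A_S` with its generators and its representation on functions. -/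
def alocData (hp : p ≠ 0) (hp1 : p ≠ 1) (hq : q ≠ 0) : QWeylData K p q (ALoc K p q) where
  x := lx K p q
  y := ly K p q
  z := uz K p q
  s := us K p q
  t := ut K p q
  weyl := by
    have h := mk_rel K p q (ExtWeylRel.weyl (K := K) (p := p) (q := q) (lam := 1) (mu := 1))
    simp only [map_sub, map_mul, map_smul, map_one] at h
    exact h
  z_eq := by
    change numAlgHom K p q (wz K p q) = _
    rw [wz, map_sub, map_mul, map_mul]
    rfl
  st := by
    have h := mk_rel K p q (ExtWeylRel.st (K := K) (p := p) (q := q) (lam := 1) (mu := 1))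
    simp only [map_mul, map_smul] at h
    exact h
  sx := by
    have h := mk_rel K p q (ExtWeylRel.sx (K := K) (p := p) (q := q) (lam := 1) (mu := 1))
    simp only [map_mul, one_smul] at h
    exact h
  sy := by
    have h := mk_rel K p q (ExtWeylRel.sy (K := K) (p := p) (q := q) (lam := 1) (mu := 1))
    simp only [map_mul, inv_one, one_smul] at h
    exact h
  tx := by
    have h := mk_rel K p q (ExtWeylRel.tx (K := K) (p := p) (q := q) (lam := 1) (mu := 1))
    simp only [map_mul, one_smul] at h
    exact h
  ty := by
    have h := mk_rel K p q (ExtWeylRel.ty (K := K) (p := p) (q := q) (lam := 1) (mu := 1))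
    simp only [map_mul, inv_one, one_smul] at h
    exact h
  ρ := repLoc K p q hp hp1 hq
  ρ_x f b n := by
    have h := repLoc_num K p q hp hp1 hq (wx K p q)
    rw [wx, repA_ι] at h
    exact (congrFun (LinearMap.congr_fun h f) (b, n)).trans (one_mul _)
  ρ_y f b n := by
    have h := repLoc_num K p q hp hp1 hq (wy K p q)
    rw [wy, repA_ι] at h
    exact congrFun (LinearMap.congr_fun h f) (b, n)
  ρ_z f b n := by
    have h := repLoc_num K p q hp hp1 hq (wz K p q)
    rw [repA_wz] at h
    exact congrFun (LinearMap.congr_fun h f) (b, n)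
  ρ_s f b n := by
    have h := repLoc_num K p q hp hp1 hq (ws K p q)
    rw [ws, repA_ι] at h
    exact (congrFun (LinearMap.congr_fun h f) (b, n)).trans (one_mul _)
  ρ_t f b n := by
    have h := repLoc_num K p q hp hp1 hq (wt K p q)
    rw [wt, repA_ι] at h
    exact congrFun (LinearMap.congr_fun h f) (b, n)
  gen := aloc_gen K p q

end Model

/-- Assume neither `p` nor `q` is a root of unity. Every unital `K`-algebra
endomorphism `φ` of `A_S` of positive type (i.e. `φ(z) = α·z` for some `α ∈ K^×`) is an
automorphism; in fact `φ(z) = z`, `φ(x) = α·z^i s^j t^k x`,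
`φ(y) = α⁻¹ p^i q^{−jk} z^{−i} s^{−j} t^{−k} y`, `φ(s) = β·z^m s^c t^d`,
`φ(t) = γ·z^n s^e t^f`, where `p^m q^{dj−ck} = 1`, `p^n q^{fj−ek} = 1` and `cf − de = 1`. -/
theorem aloc_positive_endomorphism_bijective
    (hp : p ≠ 0) (hq : q ≠ 0)
    (hpru : ∀ n : ℕ, 0 < n → p ^ n ≠ 1) (hqru : ∀ n : ℕ, 0 < n → q ^ n ≠ 1)
    (φ : ALoc K p q →ₐ[K] ALoc K p q)
    (hpos : ∃ α : Kˣ, φ (lz K p q) = (α : K) • lz K p q) :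
    Function.Bijective φ ∧
    ∃ (α β γ : Kˣ) (i j k m n c d e f : ℤ),
      p ^ m * q ^ (d * j - c * k) = 1 ∧
      p ^ n * q ^ (f * j - e * k) = 1 ∧
      c * f - d * e = 1 ∧
      φ (lz K p q) = lz K p q ∧
      φ (lx K p q) =
        (α : K) • (((uz K p q ^ i * us K p q ^ j * ut K p q ^ k : (ALoc K p q)ˣ) : ALoc K p q) *
          lx K p q) ∧
      φ (ly K p q) =
        ((α : K)⁻¹ * p ^ i * q ^ (-(j * k))) •
          (((uz K p q ^ (-i) * us K p q ^ (-j) * ut K p q ^ (-k) : (ALoc K p q)ˣ) : ALoc K p q) *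
            ly K p q) ∧
      φ (ls K p q) =
        (β : K) • ((uz K p q ^ m * us K p q ^ c * ut K p q ^ d : (ALoc K p q)ˣ) : ALoc K p q) ∧
      φ (lt K p q) =
        (γ : K) • ((uz K p q ^ n * us K p q ^ e * ut K p q ^ f : (ALoc K p q)ˣ) : ALoc K p q) := by
  obtain ⟨α, hα⟩ := hpos
  have hp1 : p ≠ 1 := by simpa using hpru 1 one_pos
  exact (alocData K p q hp hp1 hq).main hp hq hpru hqru φ α.ne_zero hα
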